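/- arXiv:1406.0080 — 2 statements merged into one kernel-verified Lean document; each statement's English description precedes it below -/
import Mathlib

section
/- Let F be a field and let T : Fin p → Fin q → Fin r → F be an order-3 tensor with slices S_i = T(·,·,i) ∈ Mat_{p,q}(F). Let a_1,…,a_k ∈ F^p, b_1,…,b_k ∈ F^q, and λ_{i,j} ∈ F for 1 ≤ i ≤ r, 1 ≤ j ≤ k, and set U_i = S_i − Σ_{j=1}^k λ_{i,j} a_j b_jᵀ. Then the tensor rank of T is at most Σ_{i=1}^r rank(U_i) + Σ_{j=1}^k rank(a_j b_jᵀ). -/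
/-- The tensor rank of an order-3 tensor `T : Fin p → Fin q → Fin r → F`: the least `l`
such that `T` is a sum of `l` pure tensors. -/
noncomputable def tensorRank3 (F : Type*) [Field F] (p q r : ℕ)
    (T : Fin p → Fin q → Fin r → F) : ℕ :=
  sInf {l : ℕ | ∃ (a : Fin l → Fin p → F) (b : Fin l → Fin q → F) (c : Fin l → Fin r → F),
    ∀ i j k, T i j k = ∑ u : Fin l, a u i * b u j * c u k}

theorem exists_rank_decomp {F : Type*} [Field F] {p q : ℕ} (A : Matrix (Fin p) (Fin q) F) :
    ∃ (f : Fin A.rank → Fin p → F) (g : Fin A.rank → Fin q → F),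
      ∀ x y, A x y = ∑ u, f u x * g u y := by
  let B : Module.Basis (Fin A.rank) F (LinearMap.range A.mulVecLin) := Module.finBasis F _
  refine ⟨fun u => (B u : Fin p → F),
    fun u y => B.repr ⟨A.mulVecLin (Pi.single y 1), LinearMap.mem_range_self _ _⟩ u, ?_⟩
  intro x y
  have h := B.sum_repr ⟨A.mulVecLin (Pi.single y 1), LinearMap.mem_range_self _ _⟩
  have h2 := congrFun (congrArg Subtype.val h) x
  rw [AddSubmonoidClass.coe_finsetSum, Finset.sum_apply] at h2
  have h3 : A x y = A.mulVecLin (Pi.single y 1) x := by simp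
  refine h3.trans (h2.symm.trans ?_)
  refine Finset.sum_congr rfl fun u _ => ?_
  rw [mul_comm]
  rfl

theorem tensorRank3_le_card {F : Type*} [Field F] {p q r : ℕ} (T : Fin p → Fin q → Fin r → F)
    {ι : Type} [Fintype ι] (a : ι → Fin p → F) (b : ι → Fin q → F) (c : ι → Fin r → F)
    (h : ∀ i j k, T i j k = ∑ u, a u i * b u j * c u k) :
    tensorRank3 F p q r T ≤ Fintype.card ι := by
  let e := (Fintype.equivFin ι).symm
  refine Nat.sInf_le ⟨fun u => a (e u), fun u => b (e u), fun u => c (e u), ?_⟩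
  intro i j k
  rw [h, ← e.sum_comp]

/-- Let `T` be an order-3 tensor with slices `S_i = T(·,·,i)`, let
`a_1, …, a_k ∈ F^p`, `b_1, …, b_k ∈ F^q`, `λ_{i,j} ∈ F`, and set
`U_i = S_i - ∑_j λ_{i,j} a_j b_jᵀ`.  Then the tensor rank of `T` is at most
`∑_i rank U_i + ∑_j rank (a_j b_jᵀ)`. -/
theorem tensorRank3_le_sum_rank_add_sum_rank
    (F : Type*) [Field F] (p q r k : ℕ) (T : Fin p → Fin q → Fin r → F)
    (a : Fin k → Fin p → F) (b : Fin k → Fin q → F) (lam : Fin r → Fin k → F) :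
    tensorRank3 F p q r T ≤
      (∑ i : Fin r, ((Matrix.of fun x y => T x y i) -
          ∑ j : Fin k, lam i j • Matrix.vecMulVec (a j) (b j)).rank)
        + ∑ j : Fin k, (Matrix.vecMulVec (a j) (b j)).rank := by
  choose f g hfg using fun i : Fin r => exists_rank_decomp ((Matrix.of fun x y => T x y i) -
          ∑ j : Fin k, lam i j • Matrix.vecMulVec (a j) (b j))
  choose f' g' hfg' using fun j : Fin k => exists_rank_decomp (Matrix.vecMulVec (a j) (b j))
  have key := tensorRank3_le_card T
    (ι := (Σ i : Fin r, Fin ((Matrix.of fun x y => T x y i) -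
          ∑ j : Fin k, lam i j • Matrix.vecMulVec (a j) (b j)).rank) ⊕
      (Σ j : Fin k, Fin (Matrix.vecMulVec (a j) (b j)).rank))
    (Sum.elim (fun s => f s.1 s.2) (fun s => f' s.1 s.2))
    (Sum.elim (fun s => g s.1 s.2) (fun s => g' s.1 s.2))
    (Sum.elim (fun s => Pi.single s.1 1) (fun s i => lam i s.1)) ?_
  · simpa using key
  · intro x y i
    have h1 := hfg i x y
    rw [Fintype.sum_sum_type, Fintype.sum_sigma, Fintype.sum_sigma]
    simp only [Sum.elim_inl, Sum.elim_inr, ← Finset.sum_mul, ← hfg, ← hfg']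
    rw [Finset.sum_eq_single i (by intro j _ hj; simp [hj.symm]) (by simp)]
    simp [Matrix.sum_apply, mul_comm]
end

section
/- Let F be a field and let T : Fin p → Fin q → Fin r → F be an order-3 tensor with slices S_i = T(·,·,i) ∈ Mat_{p,q}(F). Fix k. For parameters a_1,…,a_k ∈ F^p, b_1,…,b_k ∈ F^q and λ_{i,j} ∈ F (1 ≤ i ≤ r, 1 ≤ j ≤ k), let E(a,b,λ) be the block-diagonal matrix diag( C_1, …, C_r, D_1, …, D_k ), where C_i = ( S_i , A , 0 ; 0 , I_k , −Λ_i ; Bᵀ , 0 , I_k ) with A the p×k matrix with columns a_1,…,a_k, B the q×k matrix with columns b_1,…,b_k, Λ_i = diag(λ_{i,1},…,λ_{i,k}), and where D_j ∈ F^{p+q} is the single-column matrix obtained by stacking a_j on top of b_j. Then for every choice of a, b, λ one has rank E(a,b,λ) ≥ 2kr + (tensor rank of T). -/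
/-- The block matrix `C = ( S , A , 0 ; 0 , I_k , -Λ ; Bᵀ , 0 , I_k )`, where `A` has
columns `a_1, …, a_k`, `B` has columns `b_1, …, b_k` and `Λ = diag(λ_1, …, λ_k)`. -/
def Cblock (F : Type*) [Field F] (p q k : ℕ) (S : Matrix (Fin p) (Fin q) F)
    (a : Fin k → Fin p → F) (b : Fin k → Fin q → F) (lam : Fin k → F) :
    Matrix (Fin p ⊕ (Fin k ⊕ Fin k)) (Fin q ⊕ (Fin k ⊕ Fin k)) F :=
  Matrix.fromBlocks S
    (Matrix.of fun i (j : Fin k ⊕ Fin k) => Sum.elim (fun j' => a j' i) (fun _ => (0 : F)) j)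
    (Matrix.of fun (i : Fin k ⊕ Fin k) j => Sum.elim (fun _ => (0 : F)) (fun i' => b i' j) i)
    (Matrix.fromBlocks 1 (-(Matrix.diagonal lam)) 0 1)

/-- The block-diagonal matrix `E(a,b,λ) = diag( C_1, …, C_r, D_1, …, D_k )`, where
`C_i = ( S_i , A , 0 ; 0 , I_k , -Λ_i ; Bᵀ , 0 , I_k )` is built from the `i`-th slice
`S_i` of `T` and `Λ_i = diag(λ_{i,1}, …, λ_{i,k})`, and where `D_j` is the single column
obtained by stacking `a_j` on top of `b_j`. -/
def Emat (F : Type*) [Field F] (p q r k : ℕ) (T : Fin p → Fin q → Fin r → F)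
    (a : Fin k → Fin p → F) (b : Fin k → Fin q → F) (lam : Fin r → Fin k → F) :
    Matrix (((Fin p ⊕ (Fin k ⊕ Fin k)) × Fin r) ⊕ ((Fin p ⊕ Fin q) × Fin k))
           (((Fin q ⊕ (Fin k ⊕ Fin k)) × Fin r) ⊕ (Unit × Fin k)) F :=
  Matrix.fromBlocks
    (Matrix.blockDiagonal fun i : Fin r =>
      Cblock F p q k (Matrix.of fun x y => T x y i) a b (lam i))
    0 0
    (Matrix.blockDiagonal fun j : Fin k =>
      Matrix.of fun (rj : Fin p ⊕ Fin q) (_ : Unit) => Sum.elim (a j) (b j) rj)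

open Matrix in
lemma aux_factor {F m n : Type*} [Field F] [Fintype m] [Fintype n] (M : Matrix m n F) :
    ∃ (U : Matrix m (Fin M.rank) F) (V : Matrix (Fin M.rank) n F), M = U * V := by
  classical
  let bs : Module.Basis (Fin M.rank) F (LinearMap.range M.mulVecLin) := Module.finBasis F (LinearMap.range M.mulVecLin)
  refine ⟨Matrix.of fun x u => (bs u : m → F) x,
    Matrix.of fun u y => bs.repr ⟨M.mulVecLin (Pi.single y 1), LinearMap.mem_range_self _ _⟩ u, ?_⟩
  ext x y
  have h := congrArg (fun v : LinearMap.range M.mulVecLin => (v : m → F) x)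
    (bs.sum_repr ⟨M.mulVecLin (Pi.single y 1), LinearMap.mem_range_self _ _⟩)
  simp only [Submodule.coe_sum, Submodule.coe_smul, Finset.sum_apply, Pi.smul_apply,
    smul_eq_mul] at h
  rw [Matrix.mul_apply]
  simp only [Matrix.of_apply]
  rw [Finset.sum_congr rfl (fun u _ => mul_comm _ _)]
  refine Eq.trans ?_ h.symm
  simp

open Matrix in
lemma aux_PQ {F m n : Type*} [Field F] [Fintype m] [Fintype n] (M : Matrix m n F) :
    ∃ (P : Matrix (Fin M.rank) m F) (Q : Matrix n (Fin M.rank) F), P * M * Q = 1 := by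
  classical
  let bs : Module.Basis (Fin M.rank) F (LinearMap.range M.mulVecLin) := Module.finBasis F (LinearMap.range M.mulVecLin)
  have hq : ∀ u, ∃ v, M.mulVecLin v = (bs u : m → F) := fun u => (bs u).2
  choose q hq using hq
  obtain ⟨π, hπ⟩ := LinearMap.exists_leftInverse_of_injective
    (LinearMap.range M.mulVecLin).subtype (Submodule.ker_subtype _)
  let f : (m → F) →ₗ[F] (Fin M.rank → F) := bs.equivFun.toLinearMap ∘ₗ π
  refine ⟨LinearMap.toMatrix' f, Matrix.of fun y u => q u y, ?_⟩
  ext w u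
  have h1 : (LinearMap.toMatrix' f * M * (Matrix.of fun y u => q u y)) w u
      = (LinearMap.toMatrix' f *ᵥ (M *ᵥ q u)) w := by
    rw [Matrix.mulVec_mulVec]; rfl
  rw [h1, ← Matrix.mulVecLin_apply M, hq u, LinearMap.toMatrix'_mulVec]
  have h2 : π (bs u : m → F) = bs u := by
    have := LinearMap.congr_fun hπ (bs u)
    simpa using this
  simp [f, h2, Matrix.one_apply, Finsupp.single_apply, eq_comm]

lemma aux_le {F m n l : Type*} [Field F] [Fintype m] [Fintype n] [Fintype l] [DecidableEq l]
    (M : Matrix m n F) (P : Matrix l m F) (Q : Matrix n l F) (h : P * M * Q = 1) :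
    Fintype.card l ≤ M.rank := by
  have := Matrix.rank_one (R := F) (n := l)
  rw [← this, ← h]
  exact (Matrix.rank_mul_le_left _ _).trans (Matrix.rank_mul_le_right _ _)

lemma aux_fromBlocks {F m n m' n' : Type*} [Field F] [Fintype m] [Fintype n] [Fintype m']
    [Fintype n'] (A : Matrix m n F) (B : Matrix m' n' F) :
    A.rank + B.rank ≤ (Matrix.fromBlocks A 0 0 B).rank := by
  obtain ⟨P, Q, h⟩ := aux_PQ A
  obtain ⟨P', Q', h'⟩ := aux_PQ B
  have := aux_le (Matrix.fromBlocks A 0 0 B) (Matrix.fromBlocks P 0 0 P')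
    (Matrix.fromBlocks Q 0 0 Q') (by
      simp [Matrix.fromBlocks_multiply, h, h', Matrix.fromBlocks_one])
  simpa using this

lemma aux_blockDiagonal {F m n o : Type*} [Field F] [Fintype m] [Fintype n] [Fintype o]
    [DecidableEq o] (A : o → Matrix m n F) :
    ∑ i, (A i).rank ≤ (Matrix.blockDiagonal A).rank := by
  classical
  choose P Q h using fun i => aux_PQ (A i)
  have h1 := aux_le (Matrix.blockDiagonal' A) (Matrix.blockDiagonal' P)
    (Matrix.blockDiagonal' Q) (by
      rw [← Matrix.blockDiagonal'_mul, ← Matrix.blockDiagonal'_mul]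
      simp only [h]
      exact Matrix.blockDiagonal'_one)
  have h2 : (Matrix.blockDiagonal' A).rank = (Matrix.blockDiagonal A).rank := by
    rw [← Matrix.rank_submatrix (Matrix.blockDiagonal A)
      ((Equiv.sigmaEquivProd o m).trans (Equiv.prodComm _ _))
      ((Equiv.sigmaEquivProd o n).trans (Equiv.prodComm _ _))]
    congr 1
  rw [← h2]
  simpa using h1

lemma aux_schur {F m n l : Type*} [Field F] [Fintype m] [Fintype n] [Fintype l] [DecidableEq l]
    [DecidableEq m] [DecidableEq n]
    (A : Matrix m n F) (B : Matrix m l F) (C : Matrix l n F) (D D' : Matrix l l F)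
    (h : D * D' = 1) :
    (A - B * D' * C).rank + Fintype.card l ≤ (Matrix.fromBlocks A B C D).rank := by
  have h' : D' * D = 1 := mul_eq_one_comm.mp h
  have e : (Matrix.fromBlocks 1 (-(B * D')) 0 1 : Matrix (m ⊕ l) (m ⊕ l) F) *
      Matrix.fromBlocks A B C D *
      (Matrix.fromBlocks 1 0 (-(D' * C)) D' : Matrix (n ⊕ l) (n ⊕ l) F) = Matrix.fromBlocks (A - B * D' * C) 0 0 1 := by
    simp only [Matrix.fromBlocks_multiply]
    congr 1
    · simp [Matrix.mul_assoc, h', sub_eq_add_neg]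
    · simp [Matrix.mul_assoc, h']
    · simp [← Matrix.mul_assoc, h]
    · simp [h]
  have h1 := aux_fromBlocks (A - B * D' * C) (1 : Matrix l l F)
  rw [Matrix.rank_one, ← e] at h1
  exact h1.trans ((Matrix.rank_mul_le_left _ _).trans (Matrix.rank_mul_le_right _ _))

lemma aux_C (F : Type*) [Field F] (p q k : ℕ) (S : Matrix (Fin p) (Fin q) F)
    (a : Fin k → Fin p → F) (b : Fin k → Fin q → F) (lam : Fin k → F) :
    (Matrix.of fun x y => S x y - ∑ j, a j x * b j y * lam j).rank + 2 * k
      ≤ (Cblock F p q k S a b lam).rank := by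
  have h := aux_schur S
    (Matrix.of fun i (j : Fin k ⊕ Fin k) => Sum.elim (fun j' => a j' i) (fun _ => (0 : F)) j)
    (Matrix.of fun (i : Fin k ⊕ Fin k) j => Sum.elim (fun _ => (0 : F)) (fun i' => b i' j) i)
    (Matrix.fromBlocks 1 (-(Matrix.diagonal lam)) 0 1)
    (Matrix.fromBlocks 1 (Matrix.diagonal lam) 0 1)
    (by simp [Matrix.fromBlocks_multiply, Matrix.fromBlocks_one])
  have e : Fintype.card (Fin k ⊕ Fin k) = 2 * k := by simp; ring
  rw [e] at h
  refine le_trans (le_of_eq ?_) h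
  congr 2
  ext x y
  simp [Matrix.mul_apply, Fintype.sum_sum_type, Matrix.diagonal_apply, Matrix.one_apply]
  refine Finset.sum_congr rfl fun j _ => by ring

lemma aux_tr {F ι : Type*} [Field F] [Fintype ι] (p q r : ℕ) (T : Fin p → Fin q → Fin r → F)
    (a : ι → Fin p → F) (b : ι → Fin q → F) (c : ι → Fin r → F)
    (h : ∀ i j k, T i j k = ∑ u, a u i * b u j * c u k) :
    tensorRank3 F p q r T ≤ Fintype.card ι := by
  let e := Fintype.equivFin ι
  refine Nat.sInf_le ⟨fun u => a (e.symm u), fun u => b (e.symm u), fun u => c (e.symm u), ?_⟩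
  intro i j k
  rw [h]
  exact (Equiv.sum_comp e.symm (fun u => a u i * b u j * c u k)).symm

/-- For every choice of the parameters `a`, `b`, `λ`, the rank of the
block-diagonal matrix `E(a,b,λ) = diag( C_1, …, C_r, D_1, …, D_k )` is at least
`2kr` plus the tensor rank of `T`. -/
theorem rank_Emat_ge
    (F : Type*) [Field F] (p q r k : ℕ) (T : Fin p → Fin q → Fin r → F)
    (a : Fin k → Fin p → F) (b : Fin k → Fin q → F) (lam : Fin r → Fin k → F) :
    2 * k * r + tensorRank3 F p q r T ≤ (Emat F p q r k T a b lam).rank := by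
  let S' : Fin r → Matrix (Fin p) (Fin q) F := fun i =>
    Matrix.of fun x y => T x y i - ∑ j, a j x * b j y * lam i j
  let D : Fin k → Matrix (Fin p ⊕ Fin q) Unit F := fun j =>
    Matrix.of fun (rj : Fin p ⊕ Fin q) (_ : Unit) => Sum.elim (a j) (b j) rj
  have h1 := aux_fromBlocks (Matrix.blockDiagonal fun i : Fin r =>
      Cblock F p q k (Matrix.of fun x y => T x y i) a b (lam i)) (Matrix.blockDiagonal D)
  have h2 := aux_blockDiagonal D
  have h3 := aux_blockDiagonal (fun i : Fin r =>
      Cblock F p q k (Matrix.of fun x y => T x y i) a b (lam i))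
  have h4 : ∑ i, ((S' i).rank + 2 * k) ≤ _ :=
    Finset.sum_le_sum (fun i (_ : i ∈ Finset.univ) =>
      aux_C F p q k (Matrix.of fun x y => T x y i) a b (lam i))
  have h5 : tensorRank3 F p q r T ≤ ∑ j, (D j).rank + ∑ i, (S' i).rank := by
    choose U V hUV using fun i => aux_factor (S' i)
    choose X Y hXY using fun j => aux_factor (D j)
    have := aux_tr (ι := (Σ j, Fin (D j).rank) ⊕ (Σ i, Fin (S' i).rank)) p q r T
      (Sum.elim (fun u x => X u.1 (Sum.inl x) u.2 * Y u.1 u.2 ()) (fun u x => U u.1 x u.2))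
      (Sum.elim (fun u => b u.1) (fun u y => V u.1 u.2 y))
      (Sum.elim (fun u i => lam i u.1) (fun u => Pi.single u.1 1)) (by
        intro x y i
        rw [Fintype.sum_sum_type, Fintype.sum_sigma, Fintype.sum_sigma]
        simp only [Sum.elim_inl, Sum.elim_inr]
        have e1 : ∀ j, ∑ u, X j (Sum.inl x) u * Y j u () * b j y * lam i j
            = a j x * b j y * lam i j := by
          intro j
          rw [← Finset.sum_mul, ← Finset.sum_mul, ← Matrix.mul_apply, ← hXY]
          rfl
        have e2 : ∀ i', ∑ u, U i' x u * V i' u y * (Pi.single i' 1 : Fin r → F) i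
            = S' i' x y * (Pi.single i' 1 : Fin r → F) i := by
          intro j
          rw [← Finset.sum_mul, ← Matrix.mul_apply, ← hUV]
        rw [Finset.sum_congr rfl fun j _ => e1 j, Finset.sum_congr rfl fun j _ => e2 j]
        simp [Pi.single_apply, S'])
    simpa using this
  rw [Finset.sum_add_distrib] at h4
  simp only [Finset.sum_const, Finset.card_univ, Fintype.card_fin, smul_eq_mul] at h4
  have h6 : 2 * k * r = r * (2 * k) := by ring
  have h7 := h4.trans h3
  unfold Emat
  change _ ≤ (Matrix.fromBlocks _ 0 0 (Matrix.blockDiagonal D)).rank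
  omega
end
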